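/- Let 1 ≤ p < ∞, let m ≥ 2, and on the sequence space ℓ_p (real or complex) consider the continuous m-homogeneous polynomial P(u) = u₁u₂⋯u_m, associated with the symmetric m-linear form L(x₁,…,x_m) = (1/m!) Σ_{σ ∈ S_m} x_{1σ(1)}⋯x_{mσ(m)}. Then ‖P‖ = m^{−m/p}, and for 1 ≤ k ≤ m−1 the unit vectors x = (m−k)^{−1/p}(e₁+⋯+e_{m−k}) and y = k^{−1/p}(e_{m−k+1}+⋯+e_m) satisfy |D̂^k P(x) y| = k!·m^{m/p}/((m−k)^{(m−k)/p}·k^{k/p}) · ‖P‖; in particular the Markov-type bound C_{k,m} = k!·m^{m/p}/((m−k)^{(m−k)/p}·k^{k/p}) is attained when 1 ≤ p ≤ m/(m−1). -/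

import Mathlib

open Metric
open scoped ENNReal

/-- The Markov constant `C_{k,m} = k! m^{m/p} / ((m-k)^{(m-k)/p} k^{k/p})`. -/
noncomputable def markovC (k m : ℕ) (r : ℝ) : ℝ :=
  (k.factorial : ℝ) * (m : ℝ) ^ ((m : ℝ) / r)
    / (((m : ℝ) - (k : ℝ)) ^ (((m : ℝ) - (k : ℝ)) / r) * (k : ℝ) ^ ((k : ℝ) / r))

lemma aux_coord {𝕜 : Type*} [RCLike 𝕜] (q : ℝ≥0∞) (s : Finset ℕ) (c : 𝕜) (j : ℕ) :
    (c • ∑ i ∈ s, lp.single (E := fun _ : ℕ => 𝕜) q i (1 : 𝕜)) j = if j ∈ s then c else 0 := by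
  simp only [lp.coeFn_smul, Pi.smul_apply, lp.coeFn_sum, lp.coeFn_single, Finset.sum_apply,
    Finset.sum_pi_single]
  split_ifs <;> simp

lemma aux_norm {𝕜 : Type*} [RCLike 𝕜] (p : ℝ) (hp1 : 1 ≤ p) [Fact (1 ≤ ENNReal.ofReal p)]
    (s : Finset ℕ) (n : ℝ) (hn : (s.card : ℝ) = n) (hs : 0 < n) :
    ‖((n ^ (-(1 : ℝ) / p) : ℝ) : 𝕜) •
      ∑ i ∈ s, lp.single (E := fun _ : ℕ => 𝕜) (ENNReal.ofReal p) i (1 : 𝕜)‖ = 1 := by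
  have hp0 : 0 < p := by linarith
  have htr : (ENNReal.ofReal p).toReal = p := ENNReal.toReal_ofReal hp0.le
  have h := lp.norm_sum_single (E := fun _ : ℕ => 𝕜) (p := ENNReal.ofReal p)
    (by rw [htr]; exact hp0) (fun _ => (1 : 𝕜)) s
  rw [htr] at h
  simp only [norm_one, Real.one_rpow, Finset.sum_const, nsmul_eq_mul, mul_one, hn] at h
  have h2 : ‖∑ i ∈ s, lp.single (E := fun _ : ℕ => 𝕜) (ENNReal.ofReal p) i (1 : 𝕜)‖
      = n ^ (1 / p) := by
    rw [← h, ← Real.rpow_mul (norm_nonneg _), mul_one_div_cancel hp0.ne', Real.rpow_one]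
  rw [norm_smul, h2, RCLike.norm_ofReal, abs_of_nonneg (by positivity), ← Real.rpow_add hs]
  rw [show -1 / p + 1 / p = 0 by ring, Real.rpow_zero]

lemma aux_amgm (p : ℝ) (hp1 : 1 ≤ p) (m : ℕ) (hm : 0 < m) (z : ℕ → ℝ) (hz : ∀ i, 0 ≤ z i)
    (h : ∑ i ∈ Finset.range m, z i ^ p ≤ 1) :
    ∏ i ∈ Finset.range m, z i ≤ (m : ℝ) ^ (-(m : ℝ) / p) := by
  have hp0 : 0 < p := by linarith
  have hm0 : (0 : ℝ) < m := by exact_mod_cast hm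
  have A := Real.geom_mean_le_arith_mean_weighted (Finset.range m) (fun _ => (m : ℝ)⁻¹)
    (fun i => z i ^ p) (fun _ _ => by positivity) (by simp [hm0.ne'])
    (fun i _ => Real.rpow_nonneg (hz i) p)
  rw [← Finset.mul_sum] at A
  have hZ : 0 ≤ ∏ i ∈ Finset.range m, z i := Finset.prod_nonneg fun i _ => hz i
  have B : (∏ i ∈ Finset.range m, z i) ^ (p / m) ≤ (m : ℝ)⁻¹ := by
    rw [← Real.finsetProd_rpow _ _ (fun i _ => hz i)]
    calc _ = ∏ i ∈ Finset.range m, (z i ^ p) ^ (m : ℝ)⁻¹ := by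
          refine Finset.prod_congr rfl fun i _ => ?_
          rw [← Real.rpow_mul (hz i), div_eq_mul_inv]
      _ ≤ _ := A
      _ ≤ (m : ℝ)⁻¹ * 1 := by gcongr
      _ = _ := mul_one _
  have C := Real.rpow_le_rpow (by positivity) B (show 0 ≤ (m : ℝ) / p by positivity)
  rw [← Real.rpow_mul hZ, show p / m * (m / p) = 1 by field_simp, Real.rpow_one,
    Real.inv_rpow hm0.le, ← Real.rpow_neg hm0.le] at C
  rwa [neg_div]

lemma aux_deriv {𝕜 E : Type*} [RCLike 𝕜] [NormedAddCommGroup E] [NormedSpace 𝕜 E]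
    (P : E → 𝕜) (k : ℕ) (hP : ContDiff 𝕜 k P) (x y : E) (c : 𝕜)
    (h : ∀ t : 𝕜, P (x + t • y) = c * t ^ k) :
    iteratedFDeriv 𝕜 k P x (fun _ => y) = c * k.factorial := by
  have hQ : ContDiff 𝕜 k (fun z => P (x + z)) := hP.comp (contDiff_const.add contDiff_id)
  have h1 := (ContinuousLinearMap.toSpanSingleton 𝕜 y).iteratedFDeriv_comp_right hQ 0 le_rfl
  have h2 := congrArg (fun T => T (fun _ => (1 : 𝕜))) h1
  simp only [ContinuousMultilinearMap.compContinuousLinearMap_apply,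
    iteratedFDeriv_comp_add_left, map_zero, add_zero,
    ContinuousLinearMap.toSpanSingleton_apply, one_smul] at h2
  rw [← h2, ← iteratedDeriv_eq_iteratedFDeriv]
  have : ((fun z => P (x + z)) ∘ (ContinuousLinearMap.toSpanSingleton 𝕜 y))
      = fun t => c * t ^ k := by
    funext t; simp [h]
  rw [this, iteratedDeriv_const_mul_field, iteratedDeriv_fun_pow_zero]
  simp

/-- The extremal example on `ℓ_p` (real or complex): the `m`-homogeneous polynomial
`P(u) = u₁⋯u_m`, diagonal of the symmetric `m`-linear form
`L(x₁,…,x_m) = (1/m!) Σ_σ x_{1σ(1)}⋯x_{mσ(m)}`, has `‖P‖ = m^{-m/p}`, and for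
`1 ≤ k ≤ m-1` the unit vectors `x = (m-k)^{-1/p}(e₁+⋯+e_{m-k})` and
`y = k^{-1/p}(e_{m-k+1}+⋯+e_m)` satisfy
`|D̂^k P(x) y| = k! m^{m/p}/((m-k)^{(m-k)/p} k^{k/p}) ‖P‖`, so the Markov-type bound
`C_{k,m}` is attained (in particular when `1 ≤ p ≤ m/(m-1)`). -/
theorem markov_bound_attained_lp
    {𝕜 : Type*} [RCLike 𝕜] (p : ℝ) (hp1 : 1 ≤ p) [Fact (1 ≤ ENNReal.ofReal p)]
    (m k : ℕ) (hm : 2 ≤ m) (hk1 : 1 ≤ k) (hk : k ≤ m - 1)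
    (P : lp (fun _ : ℕ => 𝕜) (ENNReal.ofReal p) → 𝕜)
    (hPdef : ∀ u, P u = ∏ i ∈ Finset.range m, u i)
    (x y : lp (fun _ : ℕ => 𝕜) (ENNReal.ofReal p))
    (hxdef : x = ((((m : ℝ) - k) ^ (-(1 : ℝ) / p) : ℝ) : 𝕜) •
      ∑ i ∈ Finset.range (m - k), lp.single (ENNReal.ofReal p) i (1 : 𝕜))
    (hydef : y = (((k : ℝ) ^ (-(1 : ℝ) / p) : ℝ) : 𝕜) •
      ∑ i ∈ Finset.Ico (m - k) m, lp.single (ENNReal.ofReal p) i (1 : 𝕜)) :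
    (∃ L : ContinuousMultilinearMap 𝕜
        (fun _ : Fin m => lp (fun _ : ℕ => 𝕜) (ENNReal.ofReal p)) 𝕜,
      (∀ (σ : Equiv.Perm (Fin m)) (v : Fin m → lp (fun _ : ℕ => 𝕜) (ENNReal.ofReal p)),
        L (v ∘ σ) = L v) ∧
      (∀ v, L v = (m.factorial : 𝕜)⁻¹ *
        ∑ σ : Equiv.Perm (Fin m), ∏ i : Fin m, v i ((σ i : ℕ))) ∧
      ∀ u, P u = L (fun _ => u)) ∧
    sSup ((fun u => ‖P u‖) ''
        closedBall (0 : lp (fun _ : ℕ => 𝕜) (ENNReal.ofReal p)) 1)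
      = (m : ℝ) ^ (-(m : ℝ) / p) ∧
    ‖x‖ = 1 ∧ ‖y‖ = 1 ∧
    ‖iteratedFDeriv 𝕜 k P x (fun _ => y)‖
      = markovC k m p * sSup ((fun u => ‖P u‖) ''
          closedBall (0 : lp (fun _ : ℕ => 𝕜) (ENNReal.ofReal p)) 1) := by
  classical
  have hp0 : 0 < p := by linarith
  have htr : (ENNReal.ofReal p).toReal = p := ENNReal.toReal_ofReal hp0.le
  have hkm : k < m := by omega
  have hm0 : (0 : ℝ) < m := by exact_mod_cast (by omega : 0 < m)
  have hk0 : (0 : ℝ) < k := by exact_mod_cast (by omega : 0 < k)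
  have hcast : ((m - k : ℕ) : ℝ) = (m : ℝ) - k := by rw [Nat.cast_sub hkm.le]
  have hmk0 : (0 : ℝ) < (m : ℝ) - k := by
    rw [← hcast]; exact_mod_cast (by omega : 0 < m - k)
  have hpow : ∀ (a : ℝ) (n : ℕ), 0 ≤ a →
      (a ^ (-(1 : ℝ) / p)) ^ n = (a ^ ((n : ℝ) / p))⁻¹ := by
    intro a n ha
    rw [← Real.rpow_natCast, ← Real.rpow_mul ha, ← Real.rpow_neg ha]
    congr 1; ring
  have hsup : sSup ((fun u => ‖P u‖) ''
        closedBall (0 : lp (fun _ : ℕ => 𝕜) (ENNReal.ofReal p)) 1)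
      = (m : ℝ) ^ (-(m : ℝ) / p) := by
    apply IsGreatest.csSup_eq
    constructor
    · refine ⟨(((m : ℝ) ^ (-(1 : ℝ) / p) : ℝ) : 𝕜) •
        ∑ i ∈ Finset.range m, lp.single (E := fun _ : ℕ => 𝕜) (ENNReal.ofReal p) i (1 : 𝕜), ?_, ?_⟩
      · rw [mem_closedBall_zero_iff]
        exact (aux_norm p hp1 (Finset.range m) m (by simp) hm0).le
      · simp only [hPdef, aux_coord]
        rw [Finset.prod_congr rfl (fun i hi => if_pos hi), Finset.prod_const, Finset.card_range,
          norm_pow, RCLike.norm_ofReal, abs_of_nonneg (by positivity), hpow _ _ hm0.le,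
          ← Real.rpow_neg hm0.le, neg_div]
    · rintro _ ⟨u, hu, rfl⟩
      rw [mem_closedBall_zero_iff] at hu
      simp only [hPdef, norm_prod]
      refine aux_amgm p hp1 m (by omega) (fun i => ‖u i‖) (fun i => norm_nonneg _) ?_
      have := lp.sum_rpow_le_norm_rpow (by rw [htr]; exact hp0) u (Finset.range m)
      rw [htr] at this
      exact this.trans (Real.rpow_le_one (norm_nonneg _) hu hp0.le)
  refine ⟨?_, hsup, ?_, ?_, ?_⟩
  · let ev : ℕ → (lp (fun _ : ℕ => 𝕜) (ENNReal.ofReal p) →L[𝕜] 𝕜) :=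
      fun i => lp.evalCLM 𝕜 (fun _ : ℕ => 𝕜) (ENNReal.ofReal p) i
    have hL : ∀ v : Fin m → lp (fun _ : ℕ => 𝕜) (ENNReal.ofReal p),
        ((m.factorial : 𝕜)⁻¹ • ∑ σ : Equiv.Perm (Fin m),
        (ContinuousMultilinearMap.mkPiAlgebra 𝕜 (Fin m) 𝕜).compContinuousLinearMap
          (fun i => ev (σ i))) v = (m.factorial : 𝕜)⁻¹ *
        ∑ σ : Equiv.Perm (Fin m), ∏ i : Fin m, v i ((σ i : ℕ)) := by
      intro v
      simp only [ContinuousMultilinearMap.smul_apply, ContinuousMultilinearMap.sum_apply,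
        ContinuousMultilinearMap.compContinuousLinearMap_apply,
        ContinuousMultilinearMap.mkPiAlgebra_apply, smul_eq_mul]
      rfl
    refine ⟨_, ?_, hL, ?_⟩
    · intro σ v
      rw [hL, hL]
      congr 1
      refine Fintype.sum_equiv (Equiv.mulRight σ⁻¹) _ _ fun τ => ?_
      refine Fintype.prod_equiv σ _ _ fun i => ?_
      simp
    · intro u
      rw [hL, hPdef]
      have : ∀ σ : Equiv.Perm (Fin m), ∏ i : Fin m, u ((σ i : ℕ)) = ∏ i ∈ Finset.range m, u i := by
        intro σ
        rw [Finset.prod_range]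
        exact Fintype.prod_equiv σ _ _ fun i => rfl
      have hf : (m.factorial : 𝕜) ≠ 0 := by exact_mod_cast m.factorial_ne_zero
      simp only [this, Finset.sum_const, Finset.card_univ, Fintype.card_perm, Fintype.card_fin,
        nsmul_eq_mul]
      rw [inv_mul_cancel_left₀ hf]
  · rw [hxdef]
    exact aux_norm p hp1 _ _ (by rw [Finset.card_range, hcast]) hmk0
  · rw [hydef]
    refine aux_norm p hp1 _ _ ?_ hk0
    rw [Nat.card_Ico]; congr 1; omega
  · have hcd : ContDiff 𝕜 k P := by
      have : P = fun u => ∏ i ∈ Finset.range m,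
          lp.evalCLM 𝕜 (fun _ : ℕ => 𝕜) (ENNReal.ofReal p) i u := by
        funext u; exact hPdef u
      rw [this]
      exact contDiff_prod fun i _ => ContinuousLinearMap.contDiff _
    have hline : ∀ t : 𝕜, P (x + t • y) =
        ((((((m : ℝ) - k) ^ (-(1 : ℝ) / p)) : ℝ) : 𝕜) ^ (m - k)
          * ((((k : ℝ) ^ (-(1 : ℝ) / p)) : ℝ) : 𝕜) ^ k) * t ^ k := by
      intro t
      have hx : ∀ j, x j = if j ∈ Finset.range (m - k) then
          (((((m : ℝ) - k) ^ (-(1 : ℝ) / p)) : ℝ) : 𝕜) else 0 := by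
        intro j; rw [hxdef, aux_coord]
      have hy : ∀ j, y j = if j ∈ Finset.Ico (m - k) m then
          ((((k : ℝ) ^ (-(1 : ℝ) / p)) : ℝ) : 𝕜) else 0 := by
        intro j; rw [hydef, aux_coord]
      rw [hPdef, ← Finset.prod_range_mul_prod_Ico _ (Nat.sub_le m k)]
      have e1 : ∏ i ∈ Finset.range (m - k), (x + t • y) i =
          ∏ i ∈ Finset.range (m - k), (((((m : ℝ) - k) ^ (-(1 : ℝ) / p)) : ℝ) : 𝕜) := by
        refine Finset.prod_congr rfl fun i hi => ?_
        have : i ∉ Finset.Ico (m - k) m := by simp at hi ⊢; omega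
        rw [lp.coeFn_add, Pi.add_apply, lp.coeFn_smul, Pi.smul_apply, hx, hy, if_pos hi,
          if_neg this, smul_zero, add_zero]
      have e2 : ∏ i ∈ Finset.Ico (m - k) m, (x + t • y) i =
          ∏ i ∈ Finset.Ico (m - k) m, (t * ((((k : ℝ) ^ (-(1 : ℝ) / p)) : ℝ) : 𝕜)) := by
        refine Finset.prod_congr rfl fun i hi => ?_
        have : i ∉ Finset.range (m - k) := by simp at hi ⊢; omega
        rw [lp.coeFn_add, Pi.add_apply, lp.coeFn_smul, Pi.smul_apply, hx, hy, if_pos hi,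
          if_neg this, smul_eq_mul, zero_add]
      rw [e1, e2, Finset.prod_const, Finset.prod_const, Finset.card_range, Nat.card_Ico,
        Nat.sub_sub_self hkm.le, mul_pow]
      ring
    rw [aux_deriv P k hcd x y _ hline, hsup]
    rw [norm_mul, norm_mul, norm_pow, norm_pow, RCLike.norm_ofReal, RCLike.norm_ofReal,
      abs_of_nonneg (by positivity), abs_of_nonneg (by positivity), RCLike.norm_natCast,
      hpow _ _ hmk0.le, hpow _ _ hk0.le, hcast, neg_div, Real.rpow_neg hm0.le, markovC]
    have a1 := (Real.rpow_pos_of_pos hm0 ((m : ℝ) / p)).ne'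
    have a2 := (Real.rpow_pos_of_pos hk0 ((k : ℝ) / p)).ne'
    have a3 := (Real.rpow_pos_of_pos hmk0 (((m : ℝ) - k) / p)).ne'
    field_simp
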